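/- arXiv:2001.11707 — 6 statements merged into one kernel-verified Lean document; each statement's English description precedes it below -/
import Mathlib

section
/- Let α : S → ℝ be a finitely supported function with α(s) ≥ 0 for all s and ∑ₛ α(s) = 1, and let 𝒦 be a simplicial complex over S. If there exists a face F ∈ 𝒦 with F ⊆ supp(α), then the distance from α to |𝒦|₁ (with respect to the metric d(α,β) = (1/2)∑ₛ|α(s) − β(s)|) equals the infimum, over all faces F ∈ 𝒦 with F ⊆ supp(α), of (1 − ∑_{s∈F} α(s)); if no face of 𝒦 is contained in supp(α), then this distance equals 1. -/
open scoped BigOperators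

/-- A simplicial complex over the vertex set `S`: a nonempty collection of
nonempty finite subsets of `S`, closed under taking nonempty subsets. -/
def IsSimplicialComplex {S : Type*} (K : Set (Finset S)) : Prop :=
  K.Nonempty ∧ (∀ F ∈ K, F.Nonempty) ∧
    ∀ F ∈ K, ∀ G : Finset S, G.Nonempty → G ⊆ F → G ∈ K

/-- Halved ℓ¹ distance between finitely supported real functions:
`d(α,β) = (1/2) ∑ₛ |α s - β s|`. -/
noncomputable def l1dist {S : Type*} (α β : S →₀ ℝ) : ℝ :=
  (1 / 2) * (α - β).sum fun _ x => |x|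

/-- The ℓ¹ geometric realization of a collection `K` of finite subsets of `S`:
finitely supported probability vectors whose support is a face of `K`. -/
def realization {S : Type*} (K : Set (Finset S)) : Set (S →₀ ℝ) :=
  {α | (∀ s, 0 ≤ α s) ∧ (α.sum fun _ x => x) = 1 ∧ α.support ∈ K}

/-- Distance from a point to a set of finitely supported functions. -/
noncomputable def distToSet {S : Type*} (α : S →₀ ℝ) (X : Set (S →₀ ℝ)) : ℝ :=
  sInf (l1dist α '' X)

/-- One-sided Hausdorff distance between (the realizations of) two complexes. -/
noncomputable def hdelta {S : Type*} (K₁ K₂ : Set (Finset S)) : ℝ :=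
  sSup ((fun α => distToSet α (realization K₂)) '' realization K₁)

/-- Hausdorff distance between (the realizations of) two simplicial complexes. -/
noncomputable def hdist {S : Type*} (K₁ K₂ : Set (Finset S)) : ℝ :=
  max (hdelta K₁ K₂) (hdelta K₂ K₁)

/-- `d(F, K)`: supremum of distances to `|K|₁` over probability vectors
supported exactly on `F`. -/
noncomputable def dFace {S : Type*} (F : Finset S) (K : Set (Finset S)) : ℝ :=
  sSup ((fun α => distToSet α (realization K)) ''
    {α : S →₀ ℝ | (∀ s, 0 ≤ α s) ∧ (α.sum fun _ x => x) = 1 ∧ α.support = F})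

/-- The `n`-skeleton of a simplicial complex. -/
def skeleton {S : Type*} (n : ℕ) (K : Set (Finset S)) : Set (Finset S) :=
  {F | F ∈ K ∧ F.card ≤ n + 1}

theorem l1dist_eq {S : Type*} (α β : S →₀ ℝ) (h0 : ∀ s, 0 ≤ α s)
    (h1 : (α.sum fun _ x => x) = 1) (g0 : ∀ s, 0 ≤ β s) (g1 : (β.sum fun _ x => x) = 1) :
    l1dist α β = 1 - ∑ s ∈ β.support, min (α s) (β s) := by
  classical
  have e1 : (∑ s ∈ α.support ∪ β.support, α s) = 1 := by
    rw [← h1]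
    exact (Finsupp.sum_of_support_subset α Finset.subset_union_left (fun _ x => x) (by simp)).symm
  have e2 : (∑ s ∈ α.support ∪ β.support, β s) = 1 := by
    rw [← g1]
    exact (Finsupp.sum_of_support_subset β Finset.subset_union_right (fun _ x => x) (by simp)).symm
  have e3 : ((α - β).sum fun _ x => |x|) = ∑ s ∈ α.support ∪ β.support, |α s - β s| := by
    rw [Finsupp.sum_of_support_subset (α - β) (s := α.support ∪ β.support)
      Finsupp.support_sub (fun _ x => |x|) (by simp)]
    simp
  have e4 : ∑ s ∈ β.support, min (α s) (β s)
      = ∑ s ∈ α.support ∪ β.support, min (α s) (β s) := by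
    apply Finset.sum_subset Finset.subset_union_right
    intro s _ hs
    rw [Finsupp.notMem_support_iff] at hs
    rw [hs]
    exact min_eq_right (h0 s)
  have e5 : ∑ s ∈ α.support ∪ β.support, |α s - β s|
      = ∑ s ∈ α.support ∪ β.support, (α s + β s - 2 * min (α s) (β s)) := by
    apply Finset.sum_congr rfl
    intro s _
    rcases le_total (α s) (β s) with h | h
    · rw [min_eq_left h, abs_of_nonpos (by linarith)]; ring
    · rw [min_eq_right h, abs_of_nonneg (by linarith)]; ring
  unfold l1dist
  rw [e3, e5, e4, Finset.sum_sub_distrib, Finset.sum_add_distrib, e1, e2, ← Finset.mul_sum]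
  ring

theorem sum_le_one_aux {S : Type*} (α : S →₀ ℝ) (h0 : ∀ s, 0 ≤ α s)
    (h1 : (α.sum fun _ x => x) = 1) (F : Finset S) (hF : F ⊆ α.support) :
    ∑ s ∈ F, α s ≤ 1 := by
  rw [← h1]
  exact Finset.sum_le_sum_of_subset_of_nonneg hF (fun s _ _ => h0 s)

theorem exists_aux {S : Type*} (α : S →₀ ℝ) (h0 : ∀ s, 0 ≤ α s) (F : Finset S)
    (hne : F.Nonempty) (hF : ∀ s ∈ F, 0 < α s) (hle : ∑ s ∈ F, α s ≤ 1) :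
    ∃ β : S →₀ ℝ, (∀ s, 0 ≤ β s) ∧ (β.sum fun _ x => x) = 1 ∧ β.support = F ∧
      ∀ s ∈ F, α s ≤ β s := by
  classical
  obtain ⟨a, ha⟩ := hne
  have key : ∀ s, (α.filter (· ∈ F) + Finsupp.single a (1 - ∑ s ∈ F, α s)) s =
      (if s ∈ F then α s else 0) + (if a = s then (1 - ∑ s ∈ F, α s) else 0) := by
    intro s
    rw [Finsupp.add_apply, Finsupp.filter_apply, Finsupp.single_apply]
  refine ⟨α.filter (· ∈ F) + Finsupp.single a (1 - ∑ s ∈ F, α s), ?_, ?_, ?_, ?_⟩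
  · intro s
    rw [key]
    have := h0 s
    split_ifs <;> linarith
  · rw [Finsupp.sum_of_support_subset _ (s := F) ?_ _ (by simp)]
    · simp_rw [key, Finset.sum_add_distrib]
      rw [Finset.sum_ite_mem, Finset.inter_self, Finset.sum_ite_eq, if_pos ha]
      ring
    · intro s hs
      by_contra h
      rw [Finsupp.mem_support_iff, key, if_neg h, if_neg (by rintro rfl; exact h ha)] at hs
      simp at hs
  · ext s
    rw [Finsupp.mem_support_iff, key]
    constructor
    · intro hs
      by_contra h
      rw [if_neg h, if_neg (by rintro rfl; exact h ha)] at hs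
      simp at hs
    · intro h
      have := hF s h
      rw [if_pos h]
      split_ifs <;> linarith
  · intro s h
    rw [key, if_pos h]
    split_ifs <;> linarith

/-- Distance from a probability vector `α` to the realization of a complex `K`:
if some face of `K` is contained in `supp α`, the distance is the infimum of
`1 - ∑_{s ∈ F} α s` over faces `F ⊆ supp α`; otherwise it is `1`. -/
theorem stmt2 {S : Type*} (K : Set (Finset S)) (hK : IsSimplicialComplex K)
    (α : S →₀ ℝ) (h0 : ∀ s, 0 ≤ α s) (h1 : (α.sum fun _ x => x) = 1) :
    ((∃ F ∈ K, F ⊆ α.support) →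
        distToSet α (realization K) =
          sInf {x : ℝ | ∃ F ∈ K, F ⊆ α.support ∧ x = 1 - ∑ s ∈ F, α s}) ∧
    ((¬ ∃ F ∈ K, F ⊆ α.support) → distToSet α (realization K) = 1) := by
  classical
  obtain ⟨⟨F0, hF0⟩, hne, hdown⟩ := hK
  have hR : (realization K).Nonempty := by
    obtain ⟨a, ha⟩ := hne F0 hF0
    refine ⟨Finsupp.single a 1, ?_, ?_, ?_⟩
    · intro s
      rw [Finsupp.single_apply]
      split_ifs <;> norm_num
    · simp
    · rw [Finsupp.support_single_ne_zero a one_ne_zero]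
      exact hdown F0 hF0 _ (Finset.singleton_nonempty a) (by simpa using ha)
  have hmin : ∀ β ∈ realization K, ∑ s ∈ β.support, min (α s) (β s)
      ≤ ∑ s ∈ β.support ∩ α.support, α s := by
    intro β hβ
    calc ∑ s ∈ β.support, min (α s) (β s) ≤ ∑ s ∈ β.support, α s :=
          Finset.sum_le_sum fun s _ => min_le_left _ _
      _ = _ := by
          symm
          apply Finset.sum_subset Finset.inter_subset_left
          intro s hs hs2
          by_contra h
          exact hs2 (Finset.mem_inter.2 ⟨hs, Finsupp.mem_support_iff.2 h⟩)
  constructor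
  · rintro ⟨F1, hF1, hs1⟩
    have bdd : BddBelow {x : ℝ | ∃ F ∈ K, F ⊆ α.support ∧ x = 1 - ∑ s ∈ F, α s} := by
      refine ⟨0, ?_⟩
      rintro x ⟨F, hF, hs, rfl⟩
      linarith [sum_le_one_aux α h0 h1 F hs]
    have lower : ∀ x ∈ l1dist α '' realization K,
        sInf {x : ℝ | ∃ F ∈ K, F ⊆ α.support ∧ x = 1 - ∑ s ∈ F, α s} ≤ x := by
      rintro x ⟨β, hβ, rfl⟩
      rw [l1dist_eq α β h0 h1 hβ.1 hβ.2.1]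
      have hm := hmin β hβ
      by_cases hn : (β.support ∩ α.support).Nonempty
      · refine (csInf_le bdd ⟨β.support ∩ α.support, hdown _ hβ.2.2 _ hn
          Finset.inter_subset_left, Finset.inter_subset_right, rfl⟩).trans ?_
        linarith
      · rw [Finset.not_nonempty_iff_eq_empty.1 hn, Finset.sum_empty] at hm
        refine (csInf_le bdd ⟨F1, hF1, hs1, rfl⟩).trans ?_
        have : 0 ≤ ∑ s ∈ F1, α s := Finset.sum_nonneg fun s _ => h0 s
        linarith
    apply le_antisymm
    · refine le_csInf ⟨1 - ∑ s ∈ F1, α s, F1, hF1, hs1, rfl⟩ ?_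
      rintro x ⟨F, hF, hs, rfl⟩
      obtain ⟨β, b0, b1, b2, b3⟩ := exists_aux α h0 F (hne F hF)
        (fun s h => lt_of_le_of_ne (h0 s) (Ne.symm (Finsupp.mem_support_iff.1 (hs h))))
        (sum_le_one_aux α h0 h1 F hs)
      have hb : β ∈ realization K := ⟨b0, b1, b2 ▸ hF⟩
      refine (csInf_le ⟨_, lower⟩ ⟨β, hb, rfl⟩).trans ?_
      rw [l1dist_eq α β h0 h1 b0 b1, b2, Finset.sum_congr rfl fun s h => min_eq_left (b3 s h)]
    · exact le_csInf (hR.image _) lower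
  · intro hno
    have : l1dist α '' realization K = {1} := by
      apply (Set.Nonempty.subset_singleton_iff (hR.image _)).1
      rintro x ⟨β, hβ, rfl⟩
      have hm := hmin β hβ
      have hn : ¬ (β.support ∩ α.support).Nonempty := fun hn =>
        hno ⟨_, hdown _ hβ.2.2 _ hn Finset.inter_subset_left, Finset.inter_subset_right⟩
      rw [Finset.not_nonempty_iff_eq_empty.1 hn, Finset.sum_empty] at hm
      have : 0 ≤ ∑ s ∈ β.support, min (α s) (β s) :=
        Finset.sum_nonneg fun s _ => le_min (h0 s) (hβ.1 s)
      rw [Set.mem_singleton_iff, l1dist_eq α β h0 h1 hβ.1 hβ.2.1]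
      linarith
    rw [distToSet, this, csInf_singleton]
end

section
/- Let 𝒜, ℬ, 𝒦 be simplicial complexes over S such that 𝒜 ∩ 𝒦 and ℬ ∩ 𝒦 are nonempty. Then 𝒜 ∩ 𝒦 and ℬ ∩ 𝒦 are simplicial complexes and d(𝒜 ∩ 𝒦, ℬ ∩ 𝒦) ≤ d(𝒜, ℬ). -/
open scoped BigOperators

open Classical in
theorem aux_l1 {S : Type*} (α β : S →₀ ℝ) (hα : (α.sum fun _ x => x) = 1)
    (hβ : (β.sum fun _ x => x) = 1) (T : Finset S) (h1 : α.support ⊆ T) (h2 : β.support ⊆ T) :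
    l1dist α β = ∑ s ∈ T, max (α s - β s) 0 := by
  have e1 : ∑ s ∈ T, α s = 1 := by
    rw [← hα, Finsupp.sum_of_support_subset α h1 _ (by simp)]
  have e2 : ∑ s ∈ T, β s = 1 := by
    rw [← hβ, Finsupp.sum_of_support_subset β h2 _ (by simp)]
  have e3 : (α - β).support ⊆ T :=
    Finsupp.support_sub.trans (Finset.union_subset h1 h2)
  unfold l1dist
  rw [Finsupp.sum_of_support_subset _ e3 _ (by simp)]
  have e4 : ∀ s ∈ T, |(α - β) s| = 2 * max (α s - β s) 0 - (α s - β s) := by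
    intro s _
    rw [Finsupp.sub_apply]
    rcases le_total (α s - β s) 0 with h | h
    · rw [abs_of_nonpos h, max_eq_right h]; ring
    · rw [abs_of_nonneg h, max_eq_left h]; ring
  rw [Finset.sum_congr rfl e4, Finset.sum_sub_distrib, Finset.sum_sub_distrib, e1, e2,
    ← Finset.mul_sum]
  ring

theorem aux_nonneg {S : Type*} (α β : S →₀ ℝ) : 0 ≤ l1dist α β := by
  unfold l1dist Finsupp.sum
  positivity

open Classical in
theorem aux_le_one {S : Type*} {A B : Set (Finset S)} {α β : S →₀ ℝ}
    (hα : α ∈ realization A) (hβ : β ∈ realization B) : l1dist α β ≤ 1 := by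
  rw [aux_l1 α β hα.2.1 hβ.2.1 (α.support ∪ β.support) Finset.subset_union_left
    Finset.subset_union_right]
  rw [← hα.2.1, Finsupp.sum_of_support_subset α
    (Finset.subset_union_left (s₂ := β.support)) _ (by simp)]
  refine Finset.sum_le_sum fun s _ => max_le ?_ (hα.1 s)
  linarith [hβ.1 s]

theorem aux_nonempty {S : Type*} {A : Set (Finset S)} (hA : IsSimplicialComplex A) :
    (realization A).Nonempty := by
  classical
  obtain ⟨⟨F, hF⟩, h1, h2⟩ := hA
  obtain ⟨s, hs⟩ := h1 F hF
  refine ⟨Finsupp.single s 1, fun t => ?_, by simp, ?_⟩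
  · rw [Finsupp.single_apply]; split_ifs <;> norm_num
  · rw [Finsupp.support_single_ne_zero s one_ne_zero]
    exact h2 F hF _ (by simp) (by simpa using hs)

theorem aux_inter {S : Type*} {A K : Set (Finset S)} (hA : IsSimplicialComplex A)
    (hK : IsSimplicialComplex K) (h : (A ∩ K).Nonempty) : IsSimplicialComplex (A ∩ K) :=
  ⟨h, fun F hF => hA.2.1 F hF.1, fun F hF G hG hGF =>
    ⟨hA.2.2 F hF.1 G hG hGF, hK.2.2 F hF.2 G hG hGF⟩⟩

theorem aux_exists {S : Type*} {A B K : Set (Finset S)} (hB : IsSimplicialComplex B)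
    (hK : IsSimplicialComplex K) (h : (B ∩ K).Nonempty) {α β : S →₀ ℝ}
    (hα : α ∈ realization (A ∩ K)) (hβ : β ∈ realization B) :
    ∃ γ ∈ realization (B ∩ K), ∀ s ∈ β.support, α s ≤ γ s := by
  classical
  by_cases hne : (α.support ∩ β.support).Nonempty
  · set δ : S →₀ ℝ := α.filter (fun s => s ∈ β.support) with hδ
    set m : ℝ := δ.sum fun _ x => x with hm
    have hsupp : δ.support = α.support ∩ β.support := by
      ext s; simp [hδ, Finsupp.support_filter]
    have hδs : ∀ s, s ∈ β.support → δ s = α s := fun s hs => Finsupp.filter_apply_pos _ _ hs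
    have hδ0 : ∀ s, 0 ≤ δ s := by
      intro s
      rw [hδ, Finsupp.filter_apply]
      split_ifs
      exacts [hα.1 s, le_rfl]
    have hm0 : 0 < m := by
      rw [hm]
      refine Finset.sum_pos (fun s hs => ?_) (hsupp ▸ hne)
      exact lt_of_le_of_ne (hδ0 s) (Ne.symm (Finsupp.mem_support_iff.1 hs))
    have hm1 : m ≤ 1 := by
      rw [hm, ← hα.2.1, Finsupp.sum_of_support_subset δ
        (hsupp ▸ Finset.inter_subset_left : δ.support ⊆ α.support) _ (by simp)]
      refine Finset.sum_le_sum fun s _ => ?_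
      rw [hδ, Finsupp.filter_apply]
      split_ifs
      exacts [le_rfl, hα.1 s]
    have hs2 : (m⁻¹ • δ).support = α.support ∩ β.support := by
      rw [Finsupp.support_smul_eq (inv_ne_zero hm0.ne'), hsupp]
    refine ⟨m⁻¹ • δ, ⟨fun s => ?_, ?_, ?_⟩, fun s hs => ?_⟩
    · exact mul_nonneg (inv_nonneg.2 hm0.le) (hδ0 s)
    · rw [Finsupp.sum_smul_index (by simp), ← Finsupp.mul_sum, ← hm]
      exact inv_mul_cancel₀ hm0.ne'
    · rw [hs2]
      exact ⟨hB.2.2 _ hβ.2.2 _ hne Finset.inter_subset_right,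
        hK.2.2 _ hα.2.2.2 _ hne Finset.inter_subset_left⟩
    · rw [Finsupp.smul_apply, hδs s hs, smul_eq_mul]
      exact le_mul_of_one_le_left (hα.1 s) ((one_le_inv₀ hm0).2 hm1)
  · obtain ⟨γ, hγ⟩ := aux_nonempty (aux_inter hB hK h)
    refine ⟨γ, hγ, fun s hs => ?_⟩
    have : α s = 0 := by
      by_contra h0
      exact hne ⟨s, Finset.mem_inter.2 ⟨Finsupp.mem_support_iff.2 h0, hs⟩⟩
    rw [this]
    exact hγ.1 s

theorem aux_bdd {S : Type*} (α : S →₀ ℝ) (X : Set (S →₀ ℝ)) : BddBelow (l1dist α '' X) :=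
  ⟨0, by rintro _ ⟨β, _, rfl⟩; exact aux_nonneg α β⟩

theorem aux_dist {S : Type*} {A B K : Set (Finset S)} (hB : IsSimplicialComplex B)
    (hK : IsSimplicialComplex K) (h : (B ∩ K).Nonempty) {α : S →₀ ℝ}
    (hα : α ∈ realization (A ∩ K)) :
    distToSet α (realization (B ∩ K)) ≤ distToSet α (realization B) := by
  classical
  refine le_csInf ((aux_nonempty hB).image _) ?_
  rintro _ ⟨β, hβ, rfl⟩
  obtain ⟨γ, hγ, hle⟩ := aux_exists hB hK h hα hβ
  refine (csInf_le (aux_bdd _ _) ⟨γ, hγ, rfl⟩).trans ?_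
  have i1 : α.support ⊆ α.support ∪ (β.support ∪ γ.support) := Finset.subset_union_left
  have i2 : β.support ⊆ α.support ∪ (β.support ∪ γ.support) :=
    Finset.subset_union_left.trans Finset.subset_union_right
  have i3 : γ.support ⊆ α.support ∪ (β.support ∪ γ.support) :=
    Finset.subset_union_right.trans Finset.subset_union_right
  rw [aux_l1 α γ hα.2.1 hγ.2.1 _ i1 i3, aux_l1 α β hα.2.1 hβ.2.1 _ i1 i2]
  refine Finset.sum_le_sum fun s _ => max_le ?_ (le_max_right _ _)
  by_cases hs : s ∈ β.support
  · exact (sub_nonpos.2 (hle s hs)).trans (le_max_right _ _)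
  · refine le_trans ?_ (le_max_left _ _)
    rw [Finsupp.notMem_support_iff.1 hs]
    linarith [hγ.1 s]

theorem aux_hdelta {S : Type*} {A B K : Set (Finset S)} (hA : IsSimplicialComplex A)
    (hB : IsSimplicialComplex B) (hK : IsSimplicialComplex K)
    (hAK : (A ∩ K).Nonempty) (hBK : (B ∩ K).Nonempty) :
    hdelta (A ∩ K) (B ∩ K) ≤ hdelta A B := by
  refine csSup_le ((aux_nonempty (aux_inter hA hK hAK)).image _) ?_
  rintro _ ⟨α, hα, rfl⟩
  refine (aux_dist hB hK hBK hα).trans (le_csSup ?_ ⟨α, ⟨hα.1, hα.2.1, hα.2.2.1⟩, rfl⟩)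
  refine ⟨1, ?_⟩
  rintro _ ⟨α', hα', rfl⟩
  obtain ⟨β, hβ⟩ := aux_nonempty hB
  exact (csInf_le (aux_bdd _ _) ⟨β, hβ, rfl⟩).trans (aux_le_one hα' hβ)

/-- Intersecting with a fixed simplicial complex is 1-Lipschitz for the
Hausdorff distance: `d(𝒜 ∩ 𝒦, ℬ ∩ 𝒦) ≤ d(𝒜, ℬ)`, and the intersections are
again simplicial complexes (provided they are nonempty). -/
theorem stmt3 {S : Type*} (A B K : Set (Finset S))
    (hA : IsSimplicialComplex A) (hB : IsSimplicialComplex B)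
    (hK : IsSimplicialComplex K)
    (hAK : (A ∩ K).Nonempty) (hBK : (B ∩ K).Nonempty) :
    IsSimplicialComplex (A ∩ K) ∧ IsSimplicialComplex (B ∩ K) ∧
      hdist (A ∩ K) (B ∩ K) ≤ hdist A B := by
  exact ⟨aux_inter hA hK hAK, aux_inter hB hK hBK,
    max_le_max (aux_hdelta hA hB hK hAK hBK) (aux_hdelta hB hA hK hBK hAK)⟩
end

section
/- Let F be a nonempty finite subset of S with |F| = n, let 1 ≤ r ≤ n, and let 𝒦 be a simplicial complex over S containing every subset of F of cardinality r. Then d(F, 𝒦) ≤ 1 − r/n. -/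
open scoped BigOperators

theorem exists_heavy {S : Type*} (f : S → ℝ) (F : Finset S) :
    ∀ k r : ℕ, r + k = F.card → ∃ G : Finset S, G ⊆ F ∧ G.card = r ∧
      (r : ℝ) * ∑ s ∈ F, f s ≤ (F.card : ℝ) * ∑ s ∈ G, f s := by
  classical
  intro k
  induction k with
  | zero => intro r hr; exact ⟨F, subset_rfl, by omega, by simp at hr; rw [hr]⟩
  | succ k ih =>
    intro r hr
    obtain ⟨G, hGF, hG, h⟩ := ih (r + 1) (by omega)
    obtain ⟨m, hm, hmin⟩ := G.exists_min_image f (Finset.card_pos.mp (by omega))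
    refine ⟨G.erase m, (Finset.erase_subset _ _).trans hGF, by
      rw [Finset.card_erase_of_mem hm]; omega, ?_⟩
    have h1 := Finset.card_nsmul_le_sum G f (f m) hmin
    rw [hG, nsmul_eq_mul] at h1
    have h2 := Finset.add_sum_erase G f hm
    push_cast at h h1
    have hr0 : (0 : ℝ) ≤ r := by positivity
    have hp : (0 : ℝ) < (r : ℝ) + 1 := by positivity
    have hn0 : (0 : ℝ) ≤ (F.card : ℝ) := by positivity
    have h3 := mul_le_mul_of_nonneg_left h hr0
    have h4 := mul_le_mul_of_nonneg_left h1 hn0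
    rw [← h2] at h3 h4
    refine le_of_mul_le_mul_left ?_ hp
    nlinarith

/-- If `𝒦` contains every subset of `F` of cardinality `r` (with `1 ≤ r ≤ n = |F|`),
then `d(F,𝒦) ≤ 1 - r/n`. -/
theorem stmt8 {S : Type*} (K : Set (Finset S)) (hK : IsSimplicialComplex K)
    (F : Finset S) (hF : F.Nonempty) (n r : ℕ) (hn : F.card = n)
    (hr1 : 1 ≤ r) (hrn : r ≤ n)
    (hall : ∀ G : Finset S, G ⊆ F → G.card = r → G ∈ K) :
    dFace F K ≤ 1 - (r : ℝ) / n := by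
  classical
  subst hn
  have hn0 : (0 : ℝ) < F.card := by exact_mod_cast hF.card_pos
  have hrpos : (0 : ℝ) < r := by exact_mod_cast hr1
  have hrn' : (r : ℝ) ≤ F.card := by exact_mod_cast hrn
  refine Real.sSup_le ?_ (by rw [sub_nonneg, div_le_one hn0]; exact hrn')
  rintro _ ⟨α, ⟨hα0, hα1, hαF⟩, rfl⟩
  have hsum : ∑ s ∈ F, α s = 1 := by rw [← hα1, Finsupp.sum, hαF]
  obtain ⟨G, hGF, hG, h⟩ := exists_heavy α F (F.card - r) r (by omega)
  rw [hsum, mul_one] at h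
  set σ := ∑ s ∈ G, α s with hσ
  have hσr : (r : ℝ) / F.card ≤ σ := by rw [div_le_iff₀ hn0]; linarith
  have hσ0 : 0 < σ := lt_of_lt_of_le (by positivity) hσr
  have hσ1 : σ ≤ 1 := by
    rw [← hsum]
    exact Finset.sum_le_sum_of_subset_of_nonneg hGF fun s _ _ => hα0 s
  have hinv : 1 ≤ σ⁻¹ := (one_le_inv₀ hσ0).mpr hσ1
  have hsupp : ∀ s, α s ≠ 0 ↔ s ∈ F := fun s => by rw [← hαF, Finsupp.mem_support_iff]
  let β : S →₀ ℝ := Finsupp.onFinset G (fun s => if s ∈ G then σ⁻¹ * α s else 0)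
    (by intro s hs; by_contra hc; simp [hc] at hs)
  have hβ : ∀ s, β s = if s ∈ G then σ⁻¹ * α s else 0 := fun s => rfl
  have hβG : β.support = G := by
    ext s
    rw [Finsupp.mem_support_iff, hβ]
    by_cases hs : s ∈ G
    · simp [hs, hσ0.ne', (hsupp s).mpr (hGF hs)]
    · simp [hs]
  have hβK : β ∈ realization K := by
    refine ⟨fun s => ?_, ?_, hβG ▸ hall G hGF hG⟩
    · rw [hβ]
      split_ifs
      · exact mul_nonneg (by positivity) (hα0 s)
      · exact le_rfl
    · rw [Finsupp.sum, hβG, Finset.sum_congr rfl (g := fun s => σ⁻¹ * α s)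
        (fun s hs => by simp [hβ, hs]), ← Finset.mul_sum, ← hσ, inv_mul_cancel₀ hσ0.ne']
  have hd : l1dist α β = 1 - σ := by
    have hsub : (α - β).support ⊆ F := by
      intro s hs
      by_contra hc
      have h0 : α s = 0 := by by_contra h1; exact hc ((hsupp s).mp h1)
      have h1 : s ∉ G := fun h2 => hc (hGF h2)
      simp [hβ, h0] at hs
    rw [l1dist, Finsupp.sum_of_support_subset _ hsub _ (by simp), ← Finset.sum_sdiff hGF]
    have e1 : ∑ s ∈ F \ G, |(α - β) s| = ∑ s ∈ F \ G, α s :=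
      Finset.sum_congr rfl fun s hs => by
        have : s ∉ G := (Finset.mem_sdiff.mp hs).2
        simp [hβ, this, abs_of_nonneg (hα0 s)]
    have e2 : ∑ s ∈ G, |(α - β) s| = ∑ s ∈ G, (σ⁻¹ - 1) * α s :=
      Finset.sum_congr rfl fun s hs => by
        have h5 : 0 ≤ (σ⁻¹ - 1) * α s := mul_nonneg (by linarith) (hα0 s)
        rw [Finsupp.sub_apply, hβ, if_pos hs, abs_sub_comm, ← abs_of_nonneg h5]
        congr 1
        ring
    have e3 := Finset.sum_sdiff (f := fun s => α s) hGF
    rw [hsum, ← hσ] at e3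
    rw [e1, e2, ← Finset.mul_sum, ← hσ, sub_mul, inv_mul_cancel₀ hσ0.ne']
    linarith
  have hle : distToSet α (realization K) ≤ l1dist α β := by
    refine csInf_le ⟨0, ?_⟩ ⟨β, hβK, rfl⟩
    rintro _ ⟨γ, _, rfl⟩
    exact mul_nonneg (by norm_num) (Finset.sum_nonneg fun s _ => abs_nonneg _)
  show distToSet α (realization K) ≤ _
  linarith
end

section
/- If 𝒦₁ and 𝒦₂ are finite simplicial complexes over S (each having only finitely many faces), then d(𝒦₁, 𝒦₂) is a rational number. -/
open scoped BigOperators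

/-- The largest mass of a face. -/
noncomputable def gmax {S : Type*} (T : Finset (Finset S)) (hT : T.Nonempty) (x : S → ℝ) : ℝ :=
  T.sup' hT (fun F => ∑ s ∈ F, x s)

theorem l1dist_eq_s10 {S : Type*} [DecidableEq S] (α β : S →₀ ℝ) (U : Finset S)
    (hα : α.support ⊆ U) (hβ : β.support ⊆ U) :
    l1dist α β = (1 / 2) * ∑ s ∈ U, |α s - β s| := by
  unfold l1dist
  rw [Finsupp.sum_of_support_subset (s := U)]
  · simp
  · intro s hs
    by_contra h
    have h1 : α s = 0 := by
      by_contra h'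
      exact h (hα (Finsupp.mem_support_iff.2 h'))
    have h2 : β s = 0 := by
      by_contra h'
      exact h (hβ (Finsupp.mem_support_iff.2 h'))
    simp [h1, h2] at hs
  · simp

theorem sum_eq_of_subset {S : Type*} (α : S →₀ ℝ) (U : Finset S)
    (hα : α.support ⊆ U) : (α.sum fun _ x => x) = ∑ s ∈ U, α s := by
  rw [Finsupp.sum_of_support_subset (s := U) _ hα]
  simp

theorem l1dist_ge {S : Type*} (α β : S →₀ ℝ)
    (hα1 : (α.sum fun _ x => x) = 1)
    (hβ1 : (β.sum fun _ x => x) = 1) :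
    1 - ∑ s ∈ β.support, α s ≤ l1dist α β := by
  classical
  set U := α.support ∪ β.support with hU
  have ha : α.support ⊆ U := Finset.subset_union_left
  have hb : β.support ⊆ U := Finset.subset_union_right
  rw [l1dist_eq_s10 α β U ha hb]
  rw [sum_eq_of_subset α U ha] at hα1
  rw [sum_eq_of_subset β U hb] at hβ1
  have key : ∑ s ∈ U, (α s + β s - 2 * (if s ∈ β.support then α s else 0))
      ≤ ∑ s ∈ U, |α s - β s| := by
    apply Finset.sum_le_sum
    intro s _
    by_cases h : s ∈ β.support
    · rw [if_pos h]
      have := neg_abs_le (α s - β s)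
      linarith
    · rw [if_neg h]
      have h0 : β s = 0 := by simpa using h
      have := le_abs_self (α s - β s)
      linarith
  rw [Finset.sum_sub_distrib, Finset.sum_add_distrib, ← Finset.mul_sum, hα1, hβ1,
    Finset.sum_ite_mem, Finset.inter_eq_right.2 hb] at key
  linarith

theorem exists_near {S : Type*} (K : Set (Finset S)) (hK : IsSimplicialComplex K)
    (α : S →₀ ℝ) (hα0 : ∀ s, 0 ≤ α s) (hα1 : (α.sum fun _ x => x) = 1)
    (F : Finset S) (hF : F ∈ K) :
    ∃ β ∈ realization K, l1dist α β = 1 - ∑ s ∈ F, α s := by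
  classical
  obtain ⟨f, hf⟩ := hK.2.1 F hF
  have hle : ∑ s ∈ F, α s ≤ 1 := by
    rw [sum_eq_of_subset α (α.support ∪ F) Finset.subset_union_left] at hα1
    rw [← hα1]
    exact Finset.sum_le_sum_of_subset_of_nonneg Finset.subset_union_right (fun s _ _ => hα0 s)
  set c := 1 - ∑ s ∈ F, α s with hc
  let b : S → ℝ := fun s => (if s ∈ F then α s else 0) + (if s = f then c else 0)
  have hb : ∀ s, b s ≠ 0 → s ∈ F := by
    intro s hs
    by_contra h
    apply hs
    have : s ≠ f := fun e => h (e ▸ hf)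
    simp [b, h, this]
  let β : S →₀ ℝ := Finsupp.onFinset F b hb
  have hβ : ∀ s, β s = b s := fun s => rfl
  have hsub : β.support ⊆ F := by
    intro s hs
    exact hb s (by simpa [hβ] using hs)
  have hsum : (β.sum fun _ x => x) = 1 := by
    rw [sum_eq_of_subset β F hsub]
    simp only [hβ, b, Finset.sum_add_distrib, Finset.sum_ite_mem, Finset.inter_self,
      Finset.sum_ite_eq', hf, if_true]
    linarith
  refine ⟨β, ⟨?_, hsum, ?_⟩, ?_⟩
  · intro s
    rw [hβ]
    have h0 := hα0 s
    have hc0 : 0 ≤ c := by linarith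
    simp only [b]
    split_ifs <;> linarith
  · refine hK.2.2 F hF _ ?_ hsub
    rw [Finset.nonempty_iff_ne_empty]
    intro h
    rw [Finsupp.support_eq_empty] at h
    rw [h] at hsum
    simp at hsum
  · have ha : α.support ⊆ α.support ∪ F := Finset.subset_union_left
    have hFU : F ⊆ α.support ∪ F := Finset.subset_union_right
    rw [l1dist_eq_s10 α β (α.support ∪ F) ha (hsub.trans hFU)]
    rw [sum_eq_of_subset α _ ha] at hα1
    have key : ∑ s ∈ α.support ∪ F, |α s - β s| = ∑ s ∈ α.support ∪ F,
        (α s - (if s ∈ F then α s else 0) + (if s = f then c else 0)) := by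
      apply Finset.sum_congr rfl
      intro s _
      have h0 := hα0 s
      have hc0 : 0 ≤ c := by linarith
      rw [hβ]
      by_cases h : s ∈ F
      · by_cases h' : s = f
        · simp [b, h, h', hf, abs_of_nonneg hc0]
        · simp [b, h, h']
      · have : s ≠ f := fun e => h (e ▸ hf)
        simp [b, h, this, abs_of_nonneg h0]
    rw [key, Finset.sum_add_distrib, Finset.sum_sub_distrib, hα1, Finset.sum_ite_mem,
      Finset.inter_eq_right.2 hFU, Finset.sum_ite_eq', if_pos (hFU hf)]
    linarith

theorem distToSet_eq {S : Type*} (K : Set (Finset S)) (hK : IsSimplicialComplex K)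
    (T : Finset (Finset S)) (hT : T.Nonempty) (hTK : ∀ F, F ∈ T ↔ F ∈ K)
    (α : S →₀ ℝ) (hα0 : ∀ s, 0 ≤ α s) (hα1 : (α.sum fun _ x => x) = 1) :
    distToSet α (realization K) = 1 - gmax T hT α := by
  unfold distToSet
  apply IsLeast.csInf_eq
  constructor
  · obtain ⟨F, hF, hFe⟩ := Finset.exists_mem_eq_sup' hT (fun F => ∑ s ∈ F, α s)
    obtain ⟨β, hβ, hd⟩ := exists_near K hK α hα0 hα1 F ((hTK F).1 hF)
    exact ⟨β, hβ, by rw [hd, gmax, hFe]⟩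
  · rintro _ ⟨β, hβ, rfl⟩
    have h1 := l1dist_ge α β hα1 hβ.2.1
    have h2 : ∑ s ∈ β.support, α s ≤ gmax T hT α :=
      Finset.le_sup' (fun F => ∑ s ∈ F, α s) ((hTK _).2 hβ.2.2)
    linarith

/-- Closed simplex on `G`. -/
def csimp {S : Type*} (G : Finset S) : Set (S → ℝ) :=
  {x | (∀ s, x s ∈ Set.Icc (0:ℝ) 1) ∧ (∀ s, s ∉ G → x s = 0) ∧ ∑ s ∈ G, x s = 1}

theorem csimp_compact {S : Type*} (G : Finset S) : IsCompact (csimp G) := by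
  have h1 : IsCompact (Set.univ.pi fun _ : S => Set.Icc (0:ℝ) 1) :=
    isCompact_univ_pi fun _ => isCompact_Icc
  have h2 : IsClosed {x : S → ℝ | (∀ s, s ∉ G → x s = 0) ∧ ∑ s ∈ G, x s = 1} := by
    apply IsClosed.and
    · simp only [Set.ofPred_forall]
      exact isClosed_iInter fun s => isClosed_iInter fun _ =>
        isClosed_eq (continuous_apply s) continuous_const
    · exact isClosed_eq (by fun_prop) continuous_const
  have := h1.inter_right h2
  convert this using 1
  ext x
  simp only [csimp, Set.mem_inter_iff, Set.mem_pi, Set.mem_univ, true_imp_iff, Set.mem_setOf_eq]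

theorem exists_min {S : Type*} (K : Set (Finset S)) (hK : IsSimplicialComplex K)
    (hf : K.Finite) (T : Finset (Finset S)) (hT : T.Nonempty) :
    ∃ α ∈ realization K, ∀ β ∈ realization K, gmax T hT α ≤ gmax T hT β := by
  classical
  have hc : IsCompact (⋃ G ∈ K, csimp G) := hf.isCompact_biUnion fun G _ => csimp_compact G
  have hto : ∀ β ∈ realization K, (β : S → ℝ) ∈ ⋃ G ∈ K, csimp G := by
    intro β hβ
    simp only [Set.mem_iUnion]
    have hs : ∑ s ∈ β.support, β s = 1 := hβ.2.1
    refine ⟨β.support, hβ.2.2, ?_, ?_, hs⟩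
    · intro s
      refine ⟨hβ.1 s, ?_⟩
      by_cases h : s ∈ β.support
      · rw [← hs]
        exact Finset.single_le_sum (f := fun s => β s) (fun i _ => hβ.1 i) h
      · have : β s = 0 := by simpa using h
        rw [this]; norm_num
    · intro s h
      simpa using h
  have hfrom : ∀ x ∈ ⋃ G ∈ K, csimp G, ∃ β ∈ realization K, (β : S → ℝ) = x := by
    intro x hx
    simp only [Set.mem_iUnion] at hx
    obtain ⟨G, hG, h1, h2, h3⟩ := hx
    let β : S →₀ ℝ := Finsupp.onFinset G x (fun s hs => by
      by_contra h
      exact hs (h2 s h))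
    have hβ : ∀ s, β s = x s := fun s => rfl
    have hsub : β.support ⊆ G := Finsupp.support_onFinset_subset
    have hsum : (β.sum fun _ x => x) = 1 := by
      rw [sum_eq_of_subset β G hsub]
      exact h3
    refine ⟨β, ⟨fun s => (h1 s).1, hsum, ?_⟩, rfl⟩
    refine hK.2.2 G hG _ ?_ hsub
    rw [Finset.nonempty_iff_ne_empty]
    intro h
    rw [Finsupp.support_eq_empty] at h
    rw [h] at hsum
    simp at hsum
  have hne : (⋃ G ∈ K, csimp G).Nonempty := by
    obtain ⟨G, hG⟩ := hK.1
    obtain ⟨g, hg⟩ := hK.2.1 G hG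
    refine ⟨fun s => if s = g then 1 else 0, ?_⟩
    simp only [Set.mem_iUnion]
    refine ⟨G, hG, ?_, ?_, ?_⟩
    · intro s
      dsimp only
      split_ifs <;> norm_num
    · intro s hs
      have : s ≠ g := fun e => hs (e ▸ hg)
      simp [this]
    · simp [hg]
  have hcont : Continuous (gmax T hT : (S → ℝ) → ℝ) := by
    unfold gmax
    apply Continuous.finset_sup'_apply
    intro F _
    fun_prop
  obtain ⟨x, hx, hmin⟩ := hc.exists_isMinOn hne hcont.continuousOn
  obtain ⟨α, hα, rfl⟩ := hfrom x hx
  exact ⟨α, hα, fun β hβ => hmin (hto β hβ)⟩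

theorem min_rational {S : Type*} (K : Set (Finset S))
    (T : Finset (Finset S)) (hT : T.Nonempty) (α : S →₀ ℝ) (hα : α ∈ realization K)
    (hmin : ∀ β ∈ realization K, gmax T hT α ≤ gmax T hT β) :
    ∃ q : ℚ, gmax T hT α = q := by
  classical
  by_contra hirr
  set t := gmax T hT α with ht
  have hnot : t ∉ Submodule.span ℚ {(1:ℝ)} := by
    intro h
    rw [Submodule.mem_span_singleton] at h
    obtain ⟨q, hq⟩ := h
    exact hirr ⟨q, by rw [← hq, Rat.smul_def, mul_one]⟩
  obtain ⟨ψ₀, hψ0, hker⟩ := Submodule.exists_le_ker_of_notMem hnot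
  have hψ01 : ψ₀ 1 = 0 := hker (Submodule.mem_span_singleton_self _)
  obtain ⟨ψ, hψt, hψ1⟩ : ∃ ψ : ℝ →ₗ[ℚ] ℚ, ψ t < 0 ∧ ψ 1 = 0 := by
    rcases lt_or_gt_of_ne hψ0 with h | h
    · exact ⟨ψ₀, h, hψ01⟩
    · exact ⟨-ψ₀, by simpa using h, by simp [hψ01]⟩
  have hψt' : ((ψ t : ℚ) : ℝ) < 0 := by exact_mod_cast hψt
  have hlim : ∀ a b c : ℝ, a < b →
      ∀ᶠ ε in nhdsWithin (0:ℝ) (Set.Ioi 0), a + ε * c < b := by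
    intro a b c hab
    apply Filter.Eventually.filter_mono nhdsWithin_le_nhds
    have hcn : ContinuousAt (fun ε : ℝ => a + ε * c) 0 := by fun_prop
    exact hcn.eventually_lt continuousAt_const (by simpa using hab)
  have e1 : ∀ᶠ ε in nhdsWithin (0:ℝ) (Set.Ioi 0), ∀ s ∈ α.support,
      0 < α s + ε * (ψ (α s) : ℝ) := by
    rw [Filter.eventually_all_finset]
    intro s hs
    have hpos : 0 < α s := lt_of_le_of_ne (hα.1 s) (Ne.symm (Finsupp.mem_support_iff.1 hs))
    filter_upwards [hlim (-α s) 0 (-(ψ (α s) : ℝ)) (by linarith)] with ε h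
    linarith
  have hsumψ : ∀ (F : Finset S) (ε : ℝ), ∑ s ∈ F, (α s + ε * (ψ (α s) : ℝ))
      = (∑ s ∈ F, α s) + ε * (ψ (∑ s ∈ F, α s) : ℝ) := by
    intro F ε
    rw [Finset.sum_add_distrib, ← Finset.mul_sum, map_sum]
    push_cast
    rfl
  have e2 : ∀ᶠ ε in nhdsWithin (0:ℝ) (Set.Ioi 0), ∀ F ∈ T,
      ∑ s ∈ F, (α s + ε * (ψ (α s) : ℝ)) < t := by
    rw [Filter.eventually_all_finset]
    intro F hF
    have hle : ∑ s ∈ F, α s ≤ t := Finset.le_sup' (fun F => ∑ s ∈ F, α s) hF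
    rcases hle.lt_or_eq with h | h
    · filter_upwards [hlim _ _ (ψ (∑ s ∈ F, α s) : ℝ) h] with ε he
      rw [hsumψ]; exact he
    · filter_upwards [self_mem_nhdsWithin] with ε he
      rw [hsumψ, h]
      have : 0 < ε := he
      nlinarith
  obtain ⟨ε, h1, h2⟩ := (e1.and e2).exists
  have hz : ∀ s, s ∉ α.support → α s + ε * (ψ (α s) : ℝ) = 0 := by
    intro s hs
    have : α s = 0 := by simpa using hs
    simp [this]
  let β : S →₀ ℝ := Finsupp.onFinset α.support (fun s => α s + ε * (ψ (α s) : ℝ))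
    (fun s hs => by
      by_contra h
      exact hs (hz s h))
  have hβ : ∀ s, β s = α s + ε * (ψ (α s) : ℝ) := fun s => rfl
  have hsupp : β.support = α.support := by
    apply Finset.Subset.antisymm Finsupp.support_onFinset_subset
    intro s hs
    rw [Finsupp.mem_support_iff, hβ]
    exact (h1 s hs).ne'
  have hmem : β ∈ realization K := by
    refine ⟨?_, ?_, ?_⟩
    · intro s
      rw [hβ]
      by_cases h : s ∈ α.support
      · exact (h1 s h).le
      · exact (hz s h).ge
    · rw [sum_eq_of_subset β α.support hsupp.subset]
      simp only [hβ]
      rw [hsumψ, ← sum_eq_of_subset α α.support subset_rfl, hα.2.1, hψ1]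
      simp
    · rw [hsupp]; exact hα.2.2
  have hlt : gmax T hT β < t := by
    unfold gmax
    rw [Finset.sup'_lt_iff]
    exact h2
  exact absurd (hmin β hmem) (not_le.2 hlt)

theorem hdelta_rational {S : Type*} (K₁ K₂ : Set (Finset S))
    (h1 : IsSimplicialComplex K₁) (h2 : IsSimplicialComplex K₂)
    (hf1 : K₁.Finite) (hf2 : K₂.Finite) :
    ∃ q : ℚ, hdelta K₁ K₂ = (q : ℝ) := by
  have hTK : ∀ F, F ∈ hf2.toFinset ↔ F ∈ K₂ := fun F => hf2.mem_toFinset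
  have hT : hf2.toFinset.Nonempty := by
    obtain ⟨F, hF⟩ := h2.1
    exact ⟨F, (hTK F).2 hF⟩
  obtain ⟨α, hα, hmin⟩ := exists_min K₁ h1 hf1 hf2.toFinset hT
  obtain ⟨q, hq⟩ := min_rational K₁ hf2.toFinset hT α hα hmin
  refine ⟨1 - q, ?_⟩
  unfold hdelta
  apply IsGreatest.csSup_eq
  constructor
  · refine ⟨α, hα, ?_⟩
    dsimp only
    rw [distToSet_eq K₂ h2 _ hT hTK α hα.1 hα.2.1, hq]
    push_cast
    rfl
  · rintro _ ⟨β, hβ, rfl⟩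
    dsimp only
    rw [distToSet_eq K₂ h2 _ hT hTK β hβ.1 hβ.2.1]
    have := hmin β hβ
    push_cast
    linarith

/-- The Hausdorff distance between two finite simplicial complexes is rational. -/
theorem stmt10 {S : Type*} (K₁ K₂ : Set (Finset S))
    (h1 : IsSimplicialComplex K₁) (h2 : IsSimplicialComplex K₂)
    (hf1 : K₁.Finite) (hf2 : K₂.Finite) :
    ∃ q : ℚ, hdist K₁ K₂ = (q : ℝ) := by
  obtain ⟨a, ha⟩ := hdelta_rational K₁ K₂ h1 h2 hf1 hf2
  obtain ⟨b, hb⟩ := hdelta_rational K₂ K₁ h2 h1 hf2 hf1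
  exact ⟨max a b, by rw [hdist, ha, hb, Rat.cast_max]⟩
end

section
/- Assume S is infinite. For every real number a ∈ [0,1] there exist simplicial complexes 𝒦₁ ⊆ 𝒦₂ over S with d(𝒦₁, 𝒦₂) = a. (Concretely, given pairwise disjoint finite subsets S₁, S₂, … of S with |Sₙ| = qₙ and integers 1 ≤ pₙ ≤ qₙ, the complexes 𝒦₁ = ⋃ₙ 𝒫*_{≤ qₙ−pₙ}(Sₙ) and 𝒦₂ = ⋃ₙ 𝒫*_f(Sₙ) satisfy d(𝒦₁, 𝒦₂) = supₙ pₙ/qₙ.) -/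
open scoped BigOperators

namespace Stmt12Aux

lemma l1dist_eq {S : Type*} (α β : S →₀ ℝ) (U : Finset S) (hα : α.support ⊆ U)
    (hβ : β.support ⊆ U) : l1dist α β = (1 / 2) * ∑ s ∈ U, |α s - β s| := by
  classical
  unfold l1dist
  rw [Finsupp.sum_of_support_subset (s := U)]
  · simp
  · exact Finsupp.support_sub.trans (Finset.union_subset hα hβ)
  · simp

lemma l1dist_nonneg {S : Type*} (α β : S →₀ ℝ) : 0 ≤ l1dist α β := by
  unfold l1dist Finsupp.sum
  have := Finset.sum_nonneg (s := (α - β).support) (f := fun s => |(α - β) s|)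
    (fun i _ => abs_nonneg _)
  linarith

lemma bdd {S : Type*} (α : S →₀ ℝ) (X : Set (S →₀ ℝ)) : BddBelow (l1dist α '' X) :=
  ⟨0, by rintro _ ⟨β, _, rfl⟩; exact l1dist_nonneg _ _⟩

lemma hdelta_subset {S : Type*} (K₁ K₂ : Set (Finset S)) (h : K₁ ⊆ K₂) :
    hdelta K₁ K₂ = 0 := by
  have key : ∀ α ∈ realization K₁, distToSet α (realization K₂) = 0 := by
    intro α hα
    apply le_antisymm
    · refine csInf_le (bdd _ _) ⟨α, ⟨hα.1, hα.2.1, h hα.2.2⟩, ?_⟩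
      simp [l1dist]
    · apply Real.sInf_nonneg
      rintro _ ⟨β, _, rfl⟩; exact l1dist_nonneg _ _
  unfold hdelta
  apply le_antisymm
  · apply Real.sSup_nonpos
    rintro _ ⟨α, hα, rfl⟩
    exact (key α hα).le
  · apply Real.sSup_nonneg
    rintro _ ⟨α, hα, rfl⟩
    exact (key α hα).ge

lemma sum_eq {S : Type*} (α : S →₀ ℝ) (U : Finset S) (hα : α.support ⊆ U) :
    (α.sum fun _ x => x) = ∑ s ∈ U, α s :=
  Finsupp.sum_of_support_subset _ hα _ (by simp)

lemma lower {S : Type*} (α β : S →₀ ℝ) (hα : ∀ s, 0 ≤ α s)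
    (hα1 : (α.sum fun _ x => x) = 1) (hβ1 : (β.sum fun _ x => x) = 1) :
    1 - ∑ s ∈ β.support, α s ≤ l1dist α β := by
  classical
  set U := α.support ∪ β.support with hU
  have h1 : α.support ⊆ U := Finset.subset_union_left
  have h2 : β.support ⊆ U := Finset.subset_union_right
  rw [l1dist_eq α β U h1 h2]
  rw [sum_eq α U h1] at hα1
  rw [sum_eq β U h2] at hβ1
  have h3 : ∑ s ∈ β.support, α s = ∑ s ∈ U, if s ∈ β.support then α s else 0 := by
    rw [Finset.sum_ite_mem, Finset.inter_eq_right.mpr h2]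
  have h4 : ∑ s ∈ U, (α s + β s - 2 * (if s ∈ β.support then α s else 0))
      ≤ ∑ s ∈ U, |α s - β s| := by
    apply Finset.sum_le_sum
    intro s _
    split_ifs with h
    · have := neg_abs_le (α s - β s); linarith
    · have : β s = 0 := by simpa using h
      rw [this]; have := le_abs_self (α s - 0); linarith
  rw [Finset.sum_sub_distrib, Finset.sum_add_distrib, ← Finset.mul_sum, ← h3] at h4
  linarith

lemma average {S : Type*} (f : S → ℝ) (T : Finset S) (N : ℕ) (hN : T.card = N) (i : ℕ) :
    i ≤ N → ∃ G ⊆ T, G.card = N - i ∧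
      ((N - i : ℕ) : ℝ) * ∑ s ∈ T, f s ≤ N * ∑ s ∈ G, f s := by
  classical
  induction i with
  | zero => intro _; exact ⟨T, subset_rfl, by simpa using hN, by simp⟩
  | succ i ih =>
    intro hi
    obtain ⟨G, hG, hc, hs⟩ := ih (by omega)
    obtain ⟨j, hj⟩ : ∃ j, N - i = j + 1 := ⟨N - i - 1, by omega⟩
    have hj' : N - (i + 1) = j := by omega
    rw [hj] at hc hs
    rw [hj']
    obtain ⟨m, hm, hmin⟩ := G.exists_min_image f (Finset.card_pos.mp (by omega))
    refine ⟨G.erase m, (Finset.erase_subset _ _).trans hG, by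
      rw [Finset.card_erase_of_mem hm]; omega, ?_⟩
    have h1 : (G.card : ℝ) * f m ≤ ∑ s ∈ G, f s := by
      have := Finset.card_nsmul_le_sum G f (f m) hmin
      simpa using this
    have h2 := Finset.add_sum_erase G f hm
    rw [hc] at h1
    push_cast at h1 hs
    have hjp : (0 : ℝ) < (j : ℝ) + 1 := by positivity
    have hj0 : (0 : ℝ) ≤ j := by positivity
    have hN0 : (0 : ℝ) ≤ N := by positivity
    have h3 : (j : ℝ) * ∑ s ∈ G, f s ≤ (j + 1) * ∑ s ∈ G.erase m, f s := by
      rw [← h2] at h1 ⊢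
      linarith
    have h4 := mul_le_mul_of_nonneg_left hs hj0
    have h5 := mul_le_mul_of_nonneg_left h3 hN0
    refine le_of_mul_le_mul_left ?_ hjp
    linarith

lemma upper {S : Type*} (α : S →₀ ℝ) (hα : ∀ s, 0 ≤ α s)
    (hα1 : (α.sum fun _ x => x) = 1) (G : Finset S) (hc : 0 < ∑ s ∈ G, α s) :
    ∃ β : S →₀ ℝ, (∀ s, 0 ≤ β s) ∧ (β.sum fun _ x => x) = 1 ∧ β.support ⊆ G ∧
      l1dist α β ≤ 1 - ∑ s ∈ G, α s := by
  classical
  set c := ∑ s ∈ G, α s with hcdef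
  let β : S →₀ ℝ := Finsupp.onFinset G (fun s => if s ∈ G then α s / c else 0) (by
    intro s hs; by_contra h; simp [h] at hs)
  have hβ : ∀ s, β s = if s ∈ G then α s / c else 0 := fun s => rfl
  have hsupp : β.support ⊆ G := Finsupp.support_onFinset_subset
  have hβ1 : (β.sum fun _ x => x) = 1 := by
    rw [sum_eq β G hsupp, Finset.sum_congr rfl (g := fun s => α s / c)]
    · rw [← Finset.sum_div, ← hcdef, div_self hc.ne']
    · intro s hs; rw [hβ, if_pos hs]
  refine ⟨β, ?_, hβ1, hsupp, ?_⟩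
  · intro s; rw [hβ]; split_ifs
    · exact div_nonneg (hα s) hc.le
    · exact le_rfl
  set U := α.support ∪ G with hU
  have h1 : α.support ⊆ U := Finset.subset_union_left
  have hG : G ⊆ U := Finset.subset_union_right
  rw [l1dist_eq α β U h1 (hsupp.trans hG)]
  rw [sum_eq α U h1] at hα1
  rw [sum_eq β U (hsupp.trans hG)] at hβ1
  have hc1 : c ≤ 1 := by
    rw [← hα1]; exact Finset.sum_le_sum_of_subset_of_nonneg hG (fun s _ _ => hα s)
  have h3 : c = ∑ s ∈ U, if s ∈ G then α s else 0 := by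
    rw [Finset.sum_ite_mem, Finset.inter_eq_right.mpr hG]
  have h4 : ∑ s ∈ U, |α s - β s| ≤
      ∑ s ∈ U, (α s + β s - 2 * (if s ∈ G then α s else 0)) := by
    apply Finset.sum_le_sum
    intro s _
    rw [hβ]
    split_ifs with h
    · have : α s ≤ α s / c := by
        rw [le_div_iff₀ hc]; exact mul_le_of_le_one_right (hα s) hc1
      rw [abs_of_nonpos (by linarith)]; linarith
    · rw [sub_zero, abs_of_nonneg (hα s)]; linarith
  rw [Finset.sum_sub_distrib, Finset.sum_add_distrib, ← Finset.mul_sum, ← h3] at h4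
  linarith

lemma main {S : Type*} (Sn : ℕ → Finset S) (p q : ℕ → ℕ)
    (hd : ∀ m n, m ≠ n → Disjoint (Sn m) (Sn n))
    (hq : ∀ n, (Sn n).card = q n) (hp : ∀ n, 1 ≤ p n) (hpq : ∀ n, p n < q n) :
    hdist {F : Finset S | ∃ n, F.Nonempty ∧ F ⊆ Sn n ∧ F.card ≤ q n - p n}
          {F : Finset S | ∃ n, F.Nonempty ∧ F ⊆ Sn n} =
        ⨆ n, (p n : ℝ) / q n := by
  classical
  set K₁ := {F : Finset S | ∃ n, F.Nonempty ∧ F ⊆ Sn n ∧ F.card ≤ q n - p n} with hK₁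
  set K₂ := {F : Finset S | ∃ n, F.Nonempty ∧ F ⊆ Sn n} with hK₂
  have hq0 : ∀ n, (0 : ℝ) < q n := fun n => by
    have := hpq n; exact_mod_cast (by omega : 0 < q n)
  have hb : BddAbove (Set.range fun n => (p n : ℝ) / q n) := by
    refine ⟨1, ?_⟩
    rintro _ ⟨n, rfl⟩
    have : (p n : ℝ) ≤ q n := by exact_mod_cast (hpq n).le
    exact (div_le_one (hq0 n)).mpr this
  have hsub : ∀ n, ((q n - p n : ℕ) : ℝ) = q n - p n := fun n => Nat.cast_sub (hpq n).le
  -- upper bound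
  have hup : ∀ α ∈ realization K₂, ∃ n, ∃ β ∈ realization K₁,
      l1dist α β ≤ (p n : ℝ) / q n := by
    rintro α ⟨h0, h1, n, hne, hs⟩
    obtain ⟨G, hG, hGc, hGs⟩ := average α (Sn n) (q n) (hq n) (p n) (hpq n).le
    have hT : ∑ s ∈ Sn n, α s = 1 := by rw [← sum_eq α _ hs, h1]
    rw [hT, hsub, mul_one] at hGs
    have hc : 1 - (p n : ℝ) / q n ≤ ∑ s ∈ G, α s := by
      rw [one_sub_div (hq0 n).ne', div_le_iff₀ (hq0 n)]; linarith
    have hlt : (p n : ℝ) / q n < 1 := by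
      rw [div_lt_one (hq0 n)]; exact_mod_cast hpq n
    obtain ⟨β, b0, b1, bs, bd⟩ := upper α h0 h1 G (by linarith)
    refine ⟨n, β, ⟨b0, b1, n, ?_, bs.trans hG, ?_⟩, by linarith⟩
    · rw [Finset.nonempty_iff_ne_empty]
      intro h
      rw [Finsupp.support_eq_empty] at h
      simp [h] at b1
    · rw [← hGc]; exact Finset.card_le_card bs
  have hup' : ∀ x ∈ (fun α => distToSet α (realization K₁)) '' realization K₂,
      x ≤ ⨆ n, (p n : ℝ) / q n := by
    rintro _ ⟨α, hα, rfl⟩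
    obtain ⟨n, β, hβ, hle⟩ := hup α hα
    exact (csInf_le (bdd _ _) ⟨β, hβ, rfl⟩).trans (hle.trans (le_ciSup hb n))
  -- lower bound
  have hlow : ∀ n, ∃ α ∈ realization K₂, (p n : ℝ) / q n ≤ distToSet α (realization K₁) := by
    intro n
    let α : S →₀ ℝ := Finsupp.onFinset (Sn n) (fun s => if s ∈ Sn n then 1 / (q n : ℝ) else 0) (by
      intro s hs; by_contra h; simp [h] at hs)
    have hα : ∀ s, α s = if s ∈ Sn n then 1 / (q n : ℝ) else 0 := fun s => rfl
    have hsupp : α.support ⊆ Sn n := Finsupp.support_onFinset_subset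
    have h0 : ∀ s, 0 ≤ α s := by
      intro s; rw [hα]; split_ifs <;> positivity
    have h1 : (α.sum fun _ x => x) = 1 := by
      rw [sum_eq α _ hsupp, Finset.sum_congr rfl (g := fun s => 1 / (q n : ℝ))]
      · rw [Finset.sum_const, hq, nsmul_eq_mul, mul_one_div_cancel (hq0 n).ne']
      · intro s hs; rw [hα, if_pos hs]
    have hmem : α ∈ realization K₂ := by
      refine ⟨h0, h1, n, ?_, hsupp⟩
      rw [Finset.nonempty_iff_ne_empty]
      intro h
      rw [Finsupp.support_eq_empty] at h
      simp [h] at h1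
    refine ⟨α, hmem, ?_⟩
    obtain ⟨_, β₀, hβ₀, _⟩ := hup α hmem
    refine le_csInf ⟨_, β₀, hβ₀, rfl⟩ ?_
    rintro _ ⟨β, ⟨b0, b1, m, bne, bs, bc⟩, rfl⟩
    refine le_trans ?_ (lower α β h0 h1 b1)
    have hcard : (β.support ∩ Sn n).card ≤ q n - p n := by
      by_cases hmn : m = n
      · subst hmn
        exact (Finset.card_le_card Finset.inter_subset_left).trans bc
      · have : β.support ∩ Sn n = ∅ :=
          Finset.disjoint_iff_inter_eq_empty.mp ((hd m n hmn).mono_left bs)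
        simp [this]
    have hcard' : ((β.support ∩ Sn n).card : ℝ) ≤ q n - p n := by
      rw [← hsub]; exact_mod_cast hcard
    have hsum : ∑ s ∈ β.support, α s = (β.support ∩ Sn n).card * (1 / (q n : ℝ)) := by
      simp_rw [hα]
      rw [Finset.sum_ite_mem, Finset.sum_const, nsmul_eq_mul]
    have h5 : ((β.support ∩ Sn n).card : ℝ) * (1 / (q n : ℝ)) ≤ 1 - p n / q n := by
      rw [one_sub_div (hq0 n).ne', mul_one_div]
      exact div_le_div_of_nonneg_right hcard' (hq0 n).le
    rw [hsum]; linarith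
  have hδ : hdelta K₂ K₁ = ⨆ n, (p n : ℝ) / q n := by
    unfold hdelta
    obtain ⟨α₀, hα₀, _⟩ := hlow 0
    apply le_antisymm
    · exact csSup_le ⟨_, α₀, hα₀, rfl⟩ hup'
    · apply ciSup_le
      intro n
      obtain ⟨α, hα, hle⟩ := hlow n
      exact hle.trans (le_csSup ⟨_, hup'⟩ ⟨α, hα, rfl⟩)
  have h12 : K₁ ⊆ K₂ := by
    rintro F ⟨n, h1, h2, _⟩; exact ⟨n, h1, h2⟩
  unfold hdist
  rw [hdelta_subset _ _ h12, hδ]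
  apply max_eq_right
  exact Real.iSup_nonneg (fun n => by positivity)

lemma exists_sets {S : Type*} [Infinite S] (q : ℕ → ℕ) : ∃ Sn : ℕ → Finset S,
    (∀ m n, m ≠ n → Disjoint (Sn m) (Sn n)) ∧ ∀ n, (Sn n).card = q n := by
  classical
  let e := Infinite.natEmbedding S
  refine ⟨fun n => (Finset.range (q n)).image (fun k => e (Nat.pair n k)), ?_, ?_⟩
  · intro m n hmn
    rw [Finset.disjoint_left]
    intro x hx hy
    simp only [Finset.mem_image] at hx hy
    obtain ⟨i, _, rfl⟩ := hx
    obtain ⟨j, _, hj⟩ := hy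
    have := e.injective hj
    rw [Nat.pair_eq_pair] at this
    exact hmn this.1.symm
  · intro n
    rw [Finset.card_image_of_injective, Finset.card_range]
    intro i j hij
    have := e.injective hij
    rw [Nat.pair_eq_pair] at this
    exact this.2

end Stmt12Aux

theorem stmt12 {S : Type*} [Infinite S] :
    (∀ a : ℝ, 0 ≤ a → a ≤ 1 → ∃ K₁ K₂ : Set (Finset S),
      IsSimplicialComplex K₁ ∧ IsSimplicialComplex K₂ ∧ K₁ ⊆ K₂ ∧
        hdist K₁ K₂ = a) ∧
    (∀ (Sn : ℕ → Finset S) (p q : ℕ → ℕ),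
      (∀ m n, m ≠ n → Disjoint (Sn m) (Sn n)) →
      (∀ n, (Sn n).card = q n) → (∀ n, 1 ≤ p n) → (∀ n, p n < q n) →
      hdist {F : Finset S | ∃ n, F.Nonempty ∧ F ⊆ Sn n ∧ F.card ≤ q n - p n}
          {F : Finset S | ∃ n, F.Nonempty ∧ F ⊆ Sn n} =
        ⨆ n, (p n : ℝ) / q n) := by
  refine ⟨?_, fun Sn p q => Stmt12Aux.main Sn p q⟩
  intro a ha0 ha1
  rcases ha0.eq_or_lt with rfl | ha
  · let K : Set (Finset S) := {F | F.Nonempty}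
    have hK : IsSimplicialComplex K :=
      ⟨⟨{Classical.arbitrary S}, Finset.singleton_nonempty _⟩, fun F hF => hF,
        fun F _ G hG _ => hG⟩
    refine ⟨K, K, hK, hK, subset_rfl, ?_⟩
    unfold hdist
    rw [Stmt12Aux.hdelta_subset K K subset_rfl, max_self]
  · obtain ⟨N, hN⟩ := exists_nat_gt (1 / a)
    rw [div_lt_iff₀ ha] at hN
    let q : ℕ → ℕ := fun n => N + n
    let p : ℕ → ℕ := fun n => ⌈a * (q n : ℝ)⌉₊ - 1
    have haq : ∀ n, 1 < a * (q n : ℝ) := by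
      intro n
      have : (q n : ℝ) = N + n := by simp [q]
      rw [this]
      have : 0 ≤ a * (n : ℝ) := by positivity
      linarith
    have hq0 : ∀ n, (0 : ℝ) < q n := fun n => by
      have := haq n
      by_contra h
      have : a * (q n : ℝ) ≤ 0 := mul_nonpos_of_nonneg_of_nonpos ha.le (not_lt.mp h)
      linarith
    have hceil : ∀ n, 1 < ⌈a * (q n : ℝ)⌉₊ := fun n => by
      rw [Nat.lt_ceil]; simpa using haq n
    have hp : ∀ n, 1 ≤ p n := fun n => by
      have := hceil n; show 1 ≤ ⌈a * (q n : ℝ)⌉₊ - 1; omega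
    have hpc : ∀ n, (p n : ℝ) = ⌈a * (q n : ℝ)⌉₊ - 1 := fun n => by
      show ((⌈a * (q n : ℝ)⌉₊ - 1 : ℕ) : ℝ) = _
      rw [Nat.cast_sub (hceil n).le]; simp
    have hlt : ∀ n, (p n : ℝ) < a * q n := fun n => by
      have := Nat.ceil_lt_add_one (show 0 ≤ a * (q n : ℝ) by linarith [haq n])
      rw [hpc]; linarith
    have hge : ∀ n, a * q n - 1 ≤ (p n : ℝ) := fun n => by
      have := Nat.le_ceil (a * (q n : ℝ))
      rw [hpc]; linarith
    have hpq : ∀ n, p n < q n := fun n => by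
      have h1 := hlt n
      have h2 := mul_le_mul_of_nonneg_right ha1 (hq0 n).le
      have : (p n : ℝ) < q n := by linarith
      exact_mod_cast this
    have hle : ∀ n, (p n : ℝ) / q n ≤ a := fun n => by
      rw [div_le_iff₀ (hq0 n)]; exact (hlt n).le
    have hsup : ⨆ n, (p n : ℝ) / q n = a := by
      apply le_antisymm (ciSup_le hle)
      apply le_of_forall_pos_le_add
      intro ε hε
      obtain ⟨n, hn⟩ := exists_nat_gt (1 / ε)
      rw [div_lt_iff₀ hε] at hn
      have h1 : (p n : ℝ) / q n ≤ ⨆ n, (p n : ℝ) / q n :=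
        le_ciSup (f := fun n => (p n : ℝ) / q n) ⟨a, by rintro _ ⟨n, rfl⟩; exact hle n⟩ n
      have h2 : a - ε ≤ (p n : ℝ) / q n := by
        rw [le_div_iff₀ (hq0 n)]
        have h3 : (n : ℝ) ≤ q n := by simp [q]
        have h4 := mul_le_mul_of_nonneg_right h3 hε.le
        linarith [hge n]
      linarith
    obtain ⟨Sn, hd, hc⟩ := Stmt12Aux.exists_sets (S := S) q
    have hx : (Sn 0).Nonempty := by
      rw [← Finset.card_pos, hc]; have := hpq 0; omega
    obtain ⟨x, hx⟩ := hx
    refine ⟨_, _, ?_, ?_, ?_, (Stmt12Aux.main Sn p q hd hc hp hpq).trans hsup⟩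
    · refine ⟨⟨{x}, 0, by simp, by simpa using hx, ?_⟩, ?_, ?_⟩
      · have := hpq 0; rw [Finset.card_singleton]; omega
      · rintro F ⟨n, h, _⟩; exact h
      · rintro F ⟨n, h, h2, h3⟩ G hG hGF
        exact ⟨n, hG, hGF.trans h2, (Finset.card_le_card hGF).trans h3⟩
    · refine ⟨⟨{x}, 0, by simp, by simpa using hx⟩, ?_, ?_⟩
      · rintro F ⟨n, h, _⟩; exact h
      · rintro F ⟨n, h, h2⟩ G hG hGF
        exact ⟨n, hG, hGF.trans h2⟩
    · rintro F ⟨n, h1, h2, _⟩; exact ⟨n, h1, h2⟩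
end

section
/- Let S = ℕ (or any countably infinite set identified with ℕ), let Δ = 𝒫*_f(S) be the simplicial complex of all nonempty finite subsets of S, and for n ≥ 1 let 𝒦ₙ = Δ \ {F : {1,…,n} ⊆ F} be the complex obtained by removing all faces containing {1,…,n}. Then 0 < d(Δ, 𝒦ₙ) ≤ 1/n; in particular d(Δ, 𝒦ₙ) → 0 as n → ∞, so Δ is not an isolated point. -/
open scoped BigOperators

lemma l1dist_eq_sum (α β : ℕ →₀ ℝ) (T : Finset ℕ) (h : (α - β).support ⊆ T) :
    l1dist α β = (1 / 2) * ∑ s ∈ T, |α s - β s| := by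
  unfold l1dist
  rw [Finsupp.sum_of_support_subset _ h _ (by simp)]
  simp

lemma l1dist_nonneg (α β : ℕ →₀ ℝ) : 0 ≤ l1dist α β := by
  rw [l1dist_eq_sum α β _ subset_rfl]
  positivity

lemma le_l1dist (α β : ℕ →₀ ℝ) (i : ℕ) : (1 / 2) * |α i - β i| ≤ l1dist α β := by
  rw [l1dist_eq_sum α β (insert i (α - β).support) (Finset.subset_insert _ _)]
  have := Finset.single_le_sum (f := fun s => |α s - β s|)
    (fun s _ => abs_nonneg _) (Finset.mem_insert_self i (α - β).support)
  linarith

lemma distToSet_le (α β : ℕ →₀ ℝ) (X : Set (ℕ →₀ ℝ)) (h : β ∈ X) :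
    distToSet α X ≤ l1dist α β := by
  apply csInf_le
  · refine ⟨0, ?_⟩
    rintro _ ⟨γ, _, rfl⟩
    exact l1dist_nonneg α γ
  · exact ⟨β, h, rfl⟩

lemma support_nonempty_of_sum (α : ℕ →₀ ℝ) (h : (α.sum fun _ x => x) = 1) :
    α.support.Nonempty := by
  rw [Finset.nonempty_iff_ne_empty]
  intro h0
  simp [Finsupp.sum, h0] at h

lemma exists_small (n : ℕ) (hn : 1 ≤ n) (α : ℕ →₀ ℝ) (h0 : ∀ s, 0 ≤ α s)
    (h1 : (α.sum fun _ x => x) = 1) : ∃ i ∈ Finset.Icc 1 n, α i ≤ 1 / (n : ℝ) := by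
  by_contra! hc
  have hle : ∑ i ∈ Finset.Icc 1 n, α i ≤ 1 := by
    rw [← h1, Finsupp.sum_of_support_subset α
      (Finset.subset_union_left (s₂ := Finset.Icc 1 n)) _ (by simp)]
    exact Finset.sum_le_sum_of_subset_of_nonneg Finset.subset_union_right (fun i _ _ => h0 i)
  have hlt : ∑ i ∈ Finset.Icc 1 n, 1 / (n : ℝ) < ∑ i ∈ Finset.Icc 1 n, α i :=
    Finset.sum_lt_sum_of_nonempty ⟨1, by simp [hn]⟩ hc
  have hn' : (n : ℝ) ≠ 0 := by positivity
  simp [hn'] at hlt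
  linarith

lemma dist_upper (n : ℕ) (hn : 1 ≤ n) (α : ℕ →₀ ℝ) (h0 : ∀ s, 0 ≤ α s)
    (h1 : (α.sum fun _ x => x) = 1) :
    ∃ β ∈ realization {F : Finset ℕ | F.Nonempty ∧ ¬ Finset.Icc 1 n ⊆ F},
      l1dist α β ≤ 1 / (n : ℝ) := by
  obtain ⟨i, hi, hle⟩ := exists_small n hn α h0 h1
  have hi0 : i ≠ 0 := by
    have := (Finset.mem_Icc.1 hi).1
    omega
  set β : ℕ →₀ ℝ := α + (Finsupp.single 0 (α i) - Finsupp.single i (α i)) with hβ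
  have hb : ∀ s, β s = α s + ((if 0 = s then α i else 0) - if i = s then α i else 0) := by
    intro s
    simp [hβ, Finsupp.single_apply]
  have hbi : β i = 0 := by simp [hb, hi0.symm]
  have hsum : (β.sum fun _ x => x) = 1 := by
    rw [hβ, Finsupp.sum_add_index' (by simp) (by simp),
      Finsupp.sum_sub_index (by simp), h1]
    simp
  refine ⟨β, ⟨?_, hsum, support_nonempty_of_sum β hsum, ?_⟩, ?_⟩
  · intro s
    by_cases his : i = s
    · subst his
      exact hbi.ge
    · rw [hb, if_neg his]
      have := h0 s
      have := h0 i
      split_ifs <;> linarith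
  · intro hsub
    exact (Finsupp.mem_support_iff.1 (hsub hi)) hbi
  · rw [l1dist_eq_sum α β {0, i}]
    · rw [Finset.sum_pair hi0.symm, hbi, hb 0]
      simp [hi0, abs_of_nonneg (h0 i)]
      simp at hle
      linarith
    · intro s hs
      rw [Finsupp.mem_support_iff, Finsupp.sub_apply, hb] at hs
      by_contra hc
      simp only [Finset.mem_insert, Finset.mem_singleton, not_or] at hc
      apply hs
      simp [Ne.symm hc.1, Ne.symm hc.2]

lemma hdelta_set_le (n : ℕ) (hn : 1 ≤ n) (x : ℝ)
    (hx : x ∈ ((fun α => distToSet α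
      (realization {F : Finset ℕ | F.Nonempty ∧ ¬ Finset.Icc 1 n ⊆ F})) ''
      realization {F : Finset ℕ | F.Nonempty})) : x ≤ 1 / (n : ℝ) := by
  obtain ⟨α, ⟨h0, h1, _⟩, rfl⟩ := hx
  obtain ⟨β, hβ, hle⟩ := dist_upper n hn α h0 h1
  exact (distToSet_le α β _ hβ).trans hle

lemma hdist_upper (n : ℕ) (hn : 1 ≤ n) :
    hdist {F : Finset ℕ | F.Nonempty}
      {F : Finset ℕ | F.Nonempty ∧ ¬ Finset.Icc 1 n ⊆ F} ≤ 1 / (n : ℝ) := by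
  have hp : (0 : ℝ) ≤ 1 / (n : ℝ) := by positivity
  refine max_le (Real.sSup_le (hdelta_set_le n hn) hp) (Real.sSup_le ?_ hp)
  rintro _ ⟨α, ⟨h0, h1, h2⟩, rfl⟩
  have hm : α ∈ realization {F : Finset ℕ | F.Nonempty} := ⟨h0, h1, h2.1⟩
  refine (distToSet_le α α _ hm).trans ?_
  simp [l1dist]

lemma hdist_pos (n : ℕ) (hn : 1 ≤ n) :
    0 < hdist {F : Finset ℕ | F.Nonempty}
      {F : Finset ℕ | F.Nonempty ∧ ¬ Finset.Icc 1 n ⊆ F} := by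
  have hn' : (0 : ℝ) < n := by exact_mod_cast hn
  set α : ℕ →₀ ℝ := Finsupp.indicator (Finset.Icc 1 n) (fun _ _ => 1 / (n : ℝ)) with hα
  have ha : ∀ s, α s = if s ∈ Finset.Icc 1 n then 1 / (n : ℝ) else 0 := by
    intro s
    rw [hα, Finsupp.indicator_apply]
    split_ifs <;> rfl
  have h0 : ∀ s, 0 ≤ α s := by
    intro s
    rw [ha]
    split_ifs <;> positivity
  have h1 : (α.sum fun _ x => x) = 1 := by
    rw [Finsupp.sum_of_support_subset α (Finsupp.support_indicator_subset _ _) _ (by simp),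
      Finset.sum_congr rfl (fun s hs => by rw [ha, if_pos hs])]
    simp [hn'.ne']
  have hlow : 1 / (2 * (n : ℝ)) ≤ distToSet α
      (realization {F : Finset ℕ | F.Nonempty ∧ ¬ Finset.Icc 1 n ⊆ F}) := by
    obtain ⟨β, hβ, _⟩ := dist_upper n hn α h0 h1
    refine le_csInf ⟨_, β, hβ, rfl⟩ ?_
    rintro _ ⟨γ, ⟨_, _, _, hγ⟩, rfl⟩
    obtain ⟨i, hi, hiγ⟩ := Finset.not_subset.1 hγ
    have hz : γ i = 0 := by simpa using hiγ
    refine le_trans (le_of_eq ?_) (le_l1dist α γ i)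
    rw [hz, ha, if_pos hi, sub_zero, abs_of_pos (by positivity)]
    field_simp
  have hpos : 0 < 1 / (2 * (n : ℝ)) := by positivity
  refine lt_of_lt_of_le (lt_of_lt_of_le hpos hlow) (le_trans ?_ (le_max_left _ _))
  exact le_csSup ⟨1 / (n : ℝ), fun x hx => hdelta_set_le n hn x hx⟩
    ⟨α, ⟨h0, h1, support_nonempty_of_sum α h1⟩, rfl⟩

/-- With `Δ` the complex of all nonempty finite subsets of `ℕ` and
`𝒦ₙ = Δ \ {F : {1,…,n} ⊆ F}`, one has `0 < d(Δ,𝒦ₙ) ≤ 1/n` for all `n ≥ 1`,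
and hence `d(Δ,𝒦ₙ) → 0`: `Δ` is not an isolated point. -/
theorem stmt15 :
    (∀ n : ℕ, 1 ≤ n →
      0 < hdist {F : Finset ℕ | F.Nonempty}
            {F : Finset ℕ | F.Nonempty ∧ ¬ Finset.Icc 1 n ⊆ F} ∧
      hdist {F : Finset ℕ | F.Nonempty}
          {F : Finset ℕ | F.Nonempty ∧ ¬ Finset.Icc 1 n ⊆ F} ≤ 1 / (n : ℝ)) ∧
    Filter.Tendsto
      (fun n : ℕ => hdist {F : Finset ℕ | F.Nonempty}
        {F : Finset ℕ | F.Nonempty ∧ ¬ Finset.Icc 1 n ⊆ F})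
      Filter.atTop (nhds 0) := by
  refine ⟨fun n hn => ⟨hdist_pos n hn, hdist_upper n hn⟩, ?_⟩
  refine tendsto_of_tendsto_of_tendsto_of_le_of_le' tendsto_const_nhds
    tendsto_one_div_atTop_nhds_zero_nat ?_ ?_
  · filter_upwards [Filter.eventually_ge_atTop 1] with n hn using (hdist_pos n hn).le
  · filter_upwards [Filter.eventually_ge_atTop 1] with n hn using hdist_upper n hn
end
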